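/- Let L, N be a lightlike frame along the unit-speed spacelike curve γ̂ and let u₀ ∈ I with α_L(u₀) ≠ 0. Then the osculating lightlike surface f_L(u,v) = γ̂(u) + v L(u) has a cuspidal edge at the singular point (u₀, 1/α_L(u₀)) if and only if σ_L(u₀) ≠ 0; similarly, if α_N(u₀) ≠ 0, the transversal lightlike surface f_N(u,v) = γ̂(u) + v N(u) has a cuspidal edge at (u₀, 1/α_N(u₀)) if and only if σ_N(u₀) ≠ 0. -/

import Mathlib

open scoped Topology

noncomputable section

/-- Points/vectors of Lorentz–Minkowski 3-space `ℝ³₁`. -/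
abbrev R3 : Type := Fin 3 → ℝ

/-- The Lorentz–Minkowski scalar product `⟨x,y⟩ = -x₀y₀ + x₁y₁ + x₂y₂`. -/
def mink (x y : R3) : ℝ := -(x 0 * y 0) + x 1 * y 1 + x 2 * y 2

/-- `(L, N)` is a lightlike frame along the unit-speed spacelike curve `γ` on `I`:
`γ, L, N` are smooth on `I`, `⟨e,e⟩ = 1` (with `e = γ'`), `⟨e,L⟩ = ⟨e,N⟩ = 0`,
`⟨L,L⟩ = ⟨N,N⟩ = 0` and `⟨L,N⟩ = 1` on `I`. -/
structure LightlikeFrame (I : Set ℝ) (γ L N : ℝ → R3) : Prop where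
  smooth_gamma : ContDiffOn ℝ (⊤ : ℕ∞) γ I
  smooth_L : ContDiffOn ℝ (⊤ : ℕ∞) L I
  smooth_N : ContDiffOn ℝ (⊤ : ℕ∞) N I
  unit_speed : ∀ u ∈ I, mink (deriv γ u) (deriv γ u) = 1
  eL : ∀ u ∈ I, mink (deriv γ u) (L u) = 0
  eN : ∀ u ∈ I, mink (deriv γ u) (N u) = 0
  LL : ∀ u ∈ I, mink (L u) (L u) = 0
  NN : ∀ u ∈ I, mink (N u) (N u) = 0
  LN : ∀ u ∈ I, mink (L u) (N u) = 1

/-- `α_L = ⟨γ'', L⟩`. -/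
def alphaL (γ L : ℝ → R3) (u : ℝ) : ℝ := mink (deriv (deriv γ) u) (L u)

/-- `α_N = ⟨γ'', N⟩`. -/
def alphaN (γ N : ℝ → R3) (u : ℝ) : ℝ := mink (deriv (deriv γ) u) (N u)

/-- `α_G = ⟨L, N'⟩`. -/
def alphaG (L N : ℝ → R3) (u : ℝ) : ℝ := mink (L u) (deriv N u)

/-- `σ_L = α_L' + α_L α_G`. -/
def sigmaL (γ L N : ℝ → R3) (u : ℝ) : ℝ :=
  deriv (alphaL γ L) u + alphaL γ L u * alphaG L N u

/-- `σ_N = α_N' - α_N α_G`. -/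
def sigmaN (γ L N : ℝ → R3) (u : ℝ) : ℝ :=
  deriv (alphaN γ N) u - alphaN γ N u * alphaG L N u

/-- `φ` is a local diffeomorphism at `p`: it is smooth near `p` with a smooth
local inverse. -/
def IsLocalDiffeoAt {E : Type*} [NormedAddCommGroup E] [NormedSpace ℝ E]
    (φ : E → E) (p : E) : Prop :=
  ∃ U V : Set E, IsOpen U ∧ IsOpen V ∧ p ∈ U ∧ φ '' U = V ∧
    ContDiffOn ℝ (⊤ : ℕ∞) φ U ∧
    ∃ ψ : E → E, ContDiffOn ℝ (⊤ : ℕ∞) ψ V ∧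
      (∀ x ∈ U, ψ (φ x) = x) ∧ (∀ y ∈ V, φ (ψ y) = y)

/-- The map germ of `f` at `p` is `𝒜`-equivalent to the germ of `g` at `q`:
there are diffeomorphism germs `φ` of the source with `φ p = q` and `Φ` of the
target with `Φ (f p) = g q` such that `Φ ∘ f = g ∘ φ` near `p`. -/
def AEquivAt {E F : Type*} [NormedAddCommGroup E] [NormedSpace ℝ E]
    [NormedAddCommGroup F] [NormedSpace ℝ F]
    (f : E → F) (p : E) (g : E → F) (q : E) : Prop :=
  ∃ (φ : E → E) (Φ : F → F), IsLocalDiffeoAt φ p ∧ IsLocalDiffeoAt Φ (f p) ∧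
    φ p = q ∧ Φ (f p) = g q ∧
    ∃ U : Set E, IsOpen U ∧ p ∈ U ∧ ∀ x ∈ U, Φ (f x) = g (φ x)

/-- `f` has a cuspidal edge at `p`: it is `𝒜`-equivalent at `p` to
`(u,v) ↦ (u, v², v³)` at the origin. -/
def IsCuspidalEdge (f : ℝ × ℝ → R3) (p : ℝ × ℝ) : Prop :=
  AEquivAt f p (fun q : ℝ × ℝ => ![q.1, q.2 ^ 2, q.2 ^ 3]) (0, 0)

/-- `f` has a swallowtail at `p`: it is `𝒜`-equivalent at `p` to
`(u,v) ↦ (u, 4v³ + 2uv, 4v⁴ + uv²)` at the origin. -/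
def IsSwallowtail (f : ℝ × ℝ → R3) (p : ℝ × ℝ) : Prop :=
  AEquivAt f p
    (fun q : ℝ × ℝ => ![q.1, 4 * q.2 ^ 3 + 2 * q.1 * q.2, 4 * q.2 ^ 4 + q.1 * q.2 ^ 2]) (0, 0)

open scoped ContDiff FourierTransform
open MeasureTheory Filter Set

section EvenFunctions

/-- A real kernel all of whose moments exist. -/
def HasMoments (k : ℝ → ℝ) : Prop := ∀ n : ℕ, Integrable (fun x : ℝ => x ^ n * k x)

lemma HasMoments.integrable {k : ℝ → ℝ} (hk : HasMoments k) : Integrable k := by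
  simpa using hk 0

lemma HasMoments.pow_mul {k : ℝ → ℝ} (hk : HasMoments k) (m : ℕ) :
    HasMoments (fun x => x ^ m * k x) := fun n => by
  simpa [pow_add, mul_assoc] using hk (n + m)

lemma HasMoments.neg {k : ℝ → ℝ} (hk : HasMoments k) : HasMoments (fun x => -k x) :=
  fun n => by simpa using (hk n).neg

/-- A kernel whose even moments are those of a point mass at the imaginary unit. -/
def IsAlternatingKernel (k : ℝ → ℝ) : Prop :=
  HasMoments k ∧ ∀ m : ℕ, ∫ x, x ^ (2 * m) * k x = (-1) ^ m

lemma IsAlternatingKernel.neg_sq_mul {k : ℝ → ℝ} (hk : IsAlternatingKernel k) :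
    IsAlternatingKernel (fun x => -(x ^ 2 * k x)) := by
  refine ⟨(hk.1.pow_mul 2).neg, fun m => ?_⟩
  have h := hk.2 (m + 1)
  rw [show (fun x => x ^ (2 * m) * -(x ^ 2 * k x)) = fun x => -(x ^ (2 * (m + 1)) * k x) by
    funext x; ring, integral_neg, h]
  ring

lemma exists_isAlternatingKernel : ∃ k, IsAlternatingKernel k := by
  let χ : ContDiffBump (0 : ℝ) := ⟨1, 2, one_pos, one_lt_two⟩
  let ψ : ℝ → ℂ := fun x => ((χ x * Real.exp (2 * Real.pi * x) : ℝ) : ℂ)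
  have hψ : ContDiff ℝ ∞ ψ := by
    have h1 : ContDiff ℝ ∞ (fun x : ℝ => χ x * Real.exp (2 * Real.pi * x)) :=
      χ.contDiff.mul (by fun_prop)
    exact Complex.ofRealCLM.contDiff.comp h1
  have hψc : HasCompactSupport ψ :=
    (χ.hasCompactSupport.mul_right (f' := fun x => Real.exp (2 * Real.pi * x))).comp_left
      (g := ((↑) : ℝ → ℂ)) Complex.ofReal_zero
  let Ψ : SchwartzMap ℝ ℂ := hψc.toSchwartzMap hψ
  let κ : SchwartzMap ℝ ℂ := 𝓕⁻ Ψ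
  have hκ : 𝓕 (κ : ℝ → ℂ) = ψ := by
    rw [← SchwartzMap.fourier_coe, FourierTransform.fourier_fourierInv_eq]
    rfl
  have hinteg (n : ℕ) : Integrable (fun x : ℝ => x ^ n • κ x) := by
    have h := κ.integrable_pow_mul volume n
    refine (integrable_norm_iff ?_).1 (by simpa [norm_smul] using h)
    exact ((continuous_pow n).smul κ.continuous).aestronglyMeasurable
  have hre (n : ℕ) (x : ℝ) : x ^ n * (κ x).re = Complex.reCLM (x ^ n • κ x) := by
    rw [map_smul]; rfl
  refine ⟨fun x => (κ x).re, fun n => ?_, fun m => ?_⟩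
  · simp only [hre]
    exact Complex.reCLM.integrable_comp (hinteg n)
  · simp only [hre]
    rw [Complex.reCLM.integral_comp_comm (hinteg _)]
    have h := congrFun (Real.iteratedDeriv_fourier (f := κ) (N := ⊤) (n := 2 * m)
      (fun n _ => hinteg n) le_top) 0
    have hexp : ψ =ᶠ[𝓝 0] fun x : ℝ => Complex.exp ((2 * Real.pi : ℂ) * x) := by
      filter_upwards [χ.eventuallyEq_one] with x hx
      simp [ψ, hx]
    have hd (n : ℕ) : iteratedDeriv n (fun x : ℝ => Complex.exp ((2 * Real.pi : ℂ) * x)) =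
        fun x : ℝ => (2 * Real.pi : ℂ) ^ n * Complex.exp ((2 * Real.pi : ℂ) * x) := by
      induction n with
      | zero => simp
      | succ n ih =>
        rw [iteratedDeriv_succ, ih]
        funext x
        have h0 : HasDerivAt (fun x : ℝ => (2 * Real.pi : ℂ) * x) (2 * Real.pi) x := by
          simpa using (Complex.ofRealCLM.hasDerivAt (x := x)).const_mul (2 * Real.pi : ℂ)
        have h1 := (h0.cexp).const_mul ((2 * Real.pi : ℂ) ^ n)
        rw [h1.deriv]
        ring
    rw [hκ, hexp.iteratedDeriv_eq, hd, Real.fourier_eq] at h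
    have hpi : (Real.pi : ℂ) ≠ 0 := by exact_mod_cast Real.pi_ne_zero
    have h2 : (fun v : ℝ => Real.fourierChar (-(inner ℝ v 0)) •
        ((-2 * Real.pi * Complex.I * v) ^ (2 * m) • κ v)) =
        fun v : ℝ => ((-2 * Real.pi * Complex.I) ^ (2 * m) : ℂ) * (v ^ (2 * m) • κ v) := by
      funext v
      simp [mul_pow]
      ring
    rw [h2, integral_const_mul] at h
    have h3 : ((-2 * Real.pi * Complex.I) ^ (2 * m) : ℂ) =
        (2 * Real.pi) ^ (2 * m) * (-1) ^ m := by
      rw [mul_pow, pow_mul Complex.I, Complex.I_sq, pow_mul, pow_mul]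
      ring
    rw [h3] at h
    have h4 : (∫ v : ℝ, v ^ (2 * m) • κ v) = (-1) ^ m := by
      have h5 : ((2 * Real.pi : ℂ)) ^ (2 * m) ≠ 0 := pow_ne_zero _ (by simp)
      have h6 : ((-1 : ℂ) ^ m) * (-1) ^ m = 1 := by rw [← mul_pow]; simp
      simp only [Complex.ofReal_zero, mul_zero, Complex.exp_zero, mul_one] at h
      have h7 : (2 * Real.pi : ℂ) ^ (2 * m) * 1 =
          (2 * Real.pi : ℂ) ^ (2 * m) * ((-1) ^ m * ∫ v : ℝ, v ^ (2 * m) • κ v) := by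
        rw [mul_one, ← mul_assoc]; exact h
      have h8 := mul_left_cancel₀ h5 h7
      linear_combination (-(-1 : ℂ) ^ m) * h8 - (∫ v : ℝ, v ^ (2 * m) • κ v) * h6
    rw [h4, show ((-1 : ℂ) ^ m) = (((-1 : ℝ) ^ m : ℝ) : ℂ) by push_cast; rfl]
    exact Complex.ofReal_re _

variable {E : Type*} [NormedAddCommGroup E] [NormedSpace ℝ E]

lemma contDiff_succ_of_partials {n : ℕ} {f f₁ f₂ : ℝ × ℝ → E}
    (h₁ : ∀ s t, HasDerivAt (fun x => f (x, t)) (f₁ (s, t)) s)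
    (h₂ : ∀ s t, HasDerivAt (fun x => f (s, x)) (f₂ (s, t)) t)
    (hf₁ : ContDiff ℝ n f₁) (hf₂ : ContDiff ℝ n f₂) : ContDiff ℝ (n + 1 : ℕ) f := by
  have key (g : ℝ × ℝ → E) (hg : ContDiff ℝ n g) :
      ContDiff ℝ n (fun p => ContinuousLinearMap.toSpanSingleton ℝ (g p)) :=
    (ContinuousLinearMap.toSpanSingletonCLE (𝕜 := ℝ) (E := E)).contDiff.comp hg
  have k₁ := key f₁ hf₁
  have k₂ := key f₂ hf₂
  rw [Nat.cast_succ, contDiff_succ_iff_hasFDerivAt]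
  refine ⟨fun p => (ContinuousLinearMap.toSpanSingleton ℝ (f₁ p)).coprod
    (ContinuousLinearMap.toSpanSingleton ℝ (f₂ p)), ?_, fun p => ?_⟩
  · exact (ContinuousLinearMap.coprodEquivL (𝕜 := ℝ) (S := ℝ)).contDiff.comp (k₁.prodMk k₂)
  · exact (hasStrictFDerivAt_uncurry_coprod (f := fun s t => f (s, t))
      (f₁ := fun s t => ContinuousLinearMap.toSpanSingleton ℝ (f₁ (s, t)))
      (f₂ := fun s t => ContinuousLinearMap.toSpanSingleton ℝ (f₂ (s, t))) (u := p)
      (.of_forall fun v => (h₁ v.1 v.2).hasFDerivAt) (.of_forall fun v => (h₂ v.1 v.2).hasFDerivAt)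
      k₁.continuous.continuousAt k₂.continuous.continuousAt).hasFDerivAt

/-- The directional derivative of `h` along the constant field `v`. -/
def dirDeriv (v : ℝ × ℝ) (h : ℝ × ℝ → E) (p : ℝ × ℝ) : E := fderiv ℝ h p v

/-- Smooth functions of compact support on the plane. -/
def IsTest (h : ℝ × ℝ → E) : Prop := ContDiff ℝ ∞ h ∧ HasCompactSupport h

lemma contDiff_dirDeriv {h : ℝ × ℝ → E} (hh : ContDiff ℝ ∞ h) (v : ℝ × ℝ) :
    ContDiff ℝ ∞ (dirDeriv v h) :=
  (hh.fderiv_right (m := ∞) (by simp)).clm_apply contDiff_const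

lemma IsTest.isTest_dirDeriv {h : ℝ × ℝ → E} (hh : IsTest h) (v : ℝ × ℝ) : IsTest (dirDeriv v h) :=
  ⟨contDiff_dirDeriv hh.1 v, hh.2.fderiv_apply ℝ v⟩

lemma hasDerivAt_fst {h : ℝ × ℝ → E} (hh : ContDiff ℝ ∞ h) (s t : ℝ) :
    HasDerivAt (fun x => h (x, t)) (dirDeriv (1, 0) h (s, t)) s := by
  have h1 := (hh.differentiable (by simp) (s, t)).hasFDerivAt
  exact h1.comp_hasDerivAt s ((hasDerivAt_id s).prodMk (hasDerivAt_const s t))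

lemma hasDerivAt_snd {h : ℝ × ℝ → E} (hh : ContDiff ℝ ∞ h) (s t : ℝ) :
    HasDerivAt (fun x => h (s, x)) (dirDeriv (0, 1) h (s, t)) t := by
  have h1 := (hh.differentiable (by simp) (s, t)).hasFDerivAt
  exact h1.comp_hasDerivAt t ((hasDerivAt_const t s).prodMk (hasDerivAt_id t))

lemma IsTest.exists_bound {h : ℝ × ℝ → E} (hh : IsTest h) : ∃ C, ∀ p, ‖h p‖ ≤ C :=
  hh.2.exists_bound_of_continuous hh.1.continuous

/-- The average of the dilates `h (s, r ξ)` against the kernel `k`. -/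
def dilAvg (k : ℝ → ℝ) (h : ℝ × ℝ → E) (p : ℝ × ℝ) : E := ∫ ξ, k ξ • h (p.1, p.2 * ξ)

lemma IsTest.integrable_dil {k : ℝ → ℝ} (hk : Integrable k) {h : ℝ × ℝ → E} (hh : IsTest h)
    (p : ℝ × ℝ) : Integrable (fun ξ => k ξ • h (p.1, p.2 * ξ)) := by
  obtain ⟨C, hC⟩ := hh.exists_bound
  have hc : Continuous (fun ξ : ℝ => h (p.1, p.2 * ξ)) := hh.1.continuous.comp (by fun_prop)
  exact hk.smul_bdd C hc.aestronglyMeasurable (.of_forall fun ξ => hC _)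

lemma continuous_dilAvg {k : ℝ → ℝ} (hk : Integrable k) {h : ℝ × ℝ → E} (hh : IsTest h) :
    Continuous (dilAvg k h) := by
  obtain ⟨C, hC⟩ := hh.exists_bound
  refine continuous_of_dominated (bound := fun ξ => ‖k ξ‖ * C)
    (fun p => (hh.integrable_dil hk p).aestronglyMeasurable) (fun p => .of_forall fun ξ => ?_)
    (hk.norm.mul_const C) (.of_forall fun ξ => ?_)
  · rw [norm_smul]
    exact mul_le_mul_of_nonneg_left (hC _) (norm_nonneg _)
  · exact (hh.1.continuous.comp (by fun_prop)).const_smul _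

lemma hasDerivAt_dilAvg_fst {k : ℝ → ℝ} (hk : Integrable k) {h : ℝ × ℝ → E} (hh : IsTest h)
    (s r : ℝ) :
    HasDerivAt (fun x => dilAvg k h (x, r)) (dilAvg k (dirDeriv (1, 0) h) (s, r)) s := by
  obtain ⟨C, hC⟩ := (hh.isTest_dirDeriv (1, 0)).exists_bound
  refine (hasDerivAt_integral_of_dominated_loc_of_deriv_le (s := univ)
    (F := fun x ξ => k ξ • h (x, r * ξ)) (bound := fun ξ => ‖k ξ‖ * C)
    (F' := fun x ξ => k ξ • dirDeriv (1, 0) h (x, r * ξ)) univ_mem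
    (.of_forall fun x => (hh.integrable_dil hk (x, r)).aestronglyMeasurable)
    (hh.integrable_dil hk (s, r))
    ((hh.isTest_dirDeriv (1, 0)).integrable_dil hk (s, r)).aestronglyMeasurable
    (.of_forall fun ξ x _ => ?_) (hk.norm.mul_const C) (.of_forall fun ξ x _ => ?_)).2
  · rw [norm_smul]
    exact mul_le_mul_of_nonneg_left (hC _) (norm_nonneg _)
  · exact (hasDerivAt_fst hh.1 x (r * ξ)).const_smul _

lemma hasDerivAt_dilAvg_snd {k : ℝ → ℝ} (hk : HasMoments k) {h : ℝ × ℝ → E} (hh : IsTest h)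
    (s r : ℝ) :
    HasDerivAt (fun x => dilAvg k h (s, x))
      (dilAvg (fun ξ => ξ ^ 1 * k ξ) (dirDeriv (0, 1) h) (s, r)) r := by
  obtain ⟨C, hC⟩ := (hh.isTest_dirDeriv (0, 1)).exists_bound
  have hk1 := (hk.pow_mul 1).integrable
  refine (hasDerivAt_integral_of_dominated_loc_of_deriv_le (s := univ)
    (F := fun x ξ => k ξ • h (s, x * ξ)) (bound := fun ξ => ‖ξ ^ 1 * k ξ‖ * C)
    (F' := fun x ξ => (ξ ^ 1 * k ξ) • dirDeriv (0, 1) h (s, x * ξ)) univ_mem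
    (.of_forall fun x => (hh.integrable_dil hk.integrable (s, x)).aestronglyMeasurable)
    (hh.integrable_dil hk.integrable (s, r))
    ((hh.isTest_dirDeriv (0, 1)).integrable_dil hk1 (s, r)).aestronglyMeasurable
    (.of_forall fun ξ x _ => ?_) (hk1.norm.mul_const C) (.of_forall fun ξ x _ => ?_)).2
  · rw [norm_smul]
    exact mul_le_mul_of_nonneg_left (hC _) (norm_nonneg _)
  · have h1 := (hasDerivAt_snd hh.1 s (x * ξ)).scomp x ((hasDerivAt_id x).mul_const ξ)
    convert! h1.const_smul (k ξ) using 1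
    rw [smul_smul]
    ring_nf

lemma contDiff_dilAvg {k : ℝ → ℝ} (hk : HasMoments k) {h : ℝ × ℝ → E} (hh : IsTest h) :
    ContDiff ℝ ∞ (dilAvg k h) := by
  rw [contDiff_infty]
  intro n
  induction n generalizing k h with
  | zero => exact contDiff_zero.2 (continuous_dilAvg hk.integrable hh)
  | succ n ih =>
    exact contDiff_succ_of_partials (hasDerivAt_dilAvg_fst hk.integrable hh)
      (hasDerivAt_dilAvg_snd hk hh) (ih hk (hh.isTest_dirDeriv _)) (ih (hk.pow_mul 1) (hh.isTest_dirDeriv _))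

lemma IsTest.exists_eq_add_smul [CompleteSpace E] {g : ℝ × ℝ → E} (hg : IsTest g) :
    ∃ q : ℝ × ℝ → E, ContDiff ℝ ∞ q ∧ ∀ s t, g (s, t) = g (s, 0) + t • q (s, t) := by
  let k : ℝ → ℝ := (Ioc (0 : ℝ) 1).indicator 1
  have hk : HasMoments k := fun n => by
    have h1 : IntegrableOn (fun x : ℝ => x ^ n) (Ioc 0 1) :=
      ((continuous_pow n).integrableOn_Icc (a := (0 : ℝ)) (b := 1)).mono_set Ioc_subset_Icc_self
    refine (h1.integrable_indicator measurableSet_Ioc).congr (.of_forall fun x => ?_)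
    by_cases hx : x ∈ Ioc (0 : ℝ) 1 <;> simp [k, hx]
  refine ⟨dilAvg k (dirDeriv (0, 1) g), contDiff_dilAvg hk (hg.isTest_dirDeriv _), fun s t => ?_⟩
  have hker : dilAvg k (dirDeriv (0, 1) g) (s, t) =
      ∫ ξ in (0 : ℝ)..1, dirDeriv (0, 1) g (s, t * ξ) := by
    rw [intervalIntegral.integral_of_le zero_le_one, ← integral_indicator measurableSet_Ioc]
    refine integral_congr_ae (.of_forall fun x => ?_)
    by_cases hx : x ∈ Ioc (0 : ℝ) 1 <;> simp [k, hx]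
  have hcont : Continuous (fun ξ : ℝ => t • dirDeriv (0, 1) g (s, t * ξ)) :=
    ((hg.isTest_dirDeriv (0, 1)).1.continuous.comp (by fun_prop)).const_smul t
  have hftc := intervalIntegral.integral_eq_sub_of_hasDerivAt (a := (0 : ℝ)) (b := 1)
    (f := fun ξ => g (s, t * ξ)) (f' := fun ξ => t • dirDeriv (0, 1) g (s, t * ξ))
    (fun ξ _ => by
      simpa using! (hasDerivAt_snd hg.1 s (t * ξ)).scomp ξ ((hasDerivAt_id ξ).const_mul t))
    (hcont.intervalIntegrable _ _)
  rw [intervalIntegral.integral_smul] at hftc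
  rw [hker, hftc]
  simp

lemma IsTest.exists_eq_smul [CompleteSpace E] {g : ℝ × ℝ → E} (hg : IsTest g)
    (h0 : ∀ s, g (s, 0) = 0) :
    ∃ q : ℝ × ℝ → E, IsTest q ∧ ∀ s t, g (s, t) = t • q (s, t) := by
  obtain ⟨q, hq, hgq⟩ := hg.exists_eq_add_smul
  simp only [h0, zero_add] at hgq
  refine ⟨q, ⟨hq, HasCompactSupport.intro' hg.2 (isClosed_tsupport g) ?_⟩, hgq⟩
  rintro ⟨s, t⟩ hp
  have hev : ∀ᶠ p in 𝓝 (s, t), g p = 0 := notMem_tsupport_iff_eventuallyEq.1 hp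
  have hev' : ∀ᶠ x in 𝓝 t, g (s, x) = 0 :=
    (show ContinuousAt (fun x : ℝ => (s, x)) t by fun_prop).eventually hev
  by_cases ht : t = 0
  · subst ht
    have h1 : Tendsto (fun x : ℝ => q (s, x)) (𝓝[≠] 0) (𝓝 (q (s, 0))) :=
      ((hq.continuous.comp (by fun_prop : Continuous fun x : ℝ => (s, x))).tendsto 0).mono_left
        nhdsWithin_le_nhds
    refine tendsto_nhds_unique h1 (tendsto_const_nhds.congr' ?_)
    filter_upwards [hev'.filter_mono nhdsWithin_le_nhds, self_mem_nhdsWithin] with x hx hx0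
    have h2 := hgq s x
    rw [hx] at h2
    exact ((smul_eq_zero.1 h2.symm).resolve_left hx0).symm
  · have h2 := hgq s t
    rw [hev'.self_of_nhds] at h2
    exact (smul_eq_zero.1 h2.symm).resolve_left ht

/-- Functions which are even in the second variable. -/
def IsEven (h : ℝ × ℝ → E) : Prop := ∀ s t, h (s, -t) = h (s, t)

lemma IsEven.dirDeriv_fst {h : ℝ × ℝ → E} (he : IsEven h) (hh : ContDiff ℝ ∞ h) :
    IsEven (dirDeriv (1, 0) h) := fun s t => by
  have h1 := hasDerivAt_fst hh s (-t)
  simp only [he _ t] at h1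
  exact h1.unique (hasDerivAt_fst hh s t)

lemma IsEven.dirDeriv_snd {h : ℝ × ℝ → E} (he : IsEven h) (hh : ContDiff ℝ ∞ h) (s t : ℝ) :
    dirDeriv (0, 1) h (s, -t) = -dirDeriv (0, 1) h (s, t) := by
  have h1 := (hasDerivAt_snd hh s (-t)).scomp t (hasDerivAt_neg t)
  have h2 : ((fun x => h (s, x)) ∘ Neg.neg) = fun x => h (s, x) := by
    funext x; exact he s x
  rw [h2] at h1
  have h3 := h1.unique (hasDerivAt_snd hh s t)
  rw [← h3]; simp

lemma isEven_of_smul {g q : ℝ × ℝ → E} (hg : ∀ s t, g (s, -t) = -g (s, t))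
    (hq : ∀ s t, g (s, t) = t • q (s, t)) : IsEven q := fun s t => by
  by_cases ht : t = 0
  · simp [ht]
  · have h1 := hg s t
    rw [hq, hq, ← neg_smul] at h1
    exact smul_right_injective E (neg_ne_zero.2 ht) h1

lemma eq_zero_of_odd {g : ℝ × ℝ → E} (hg : ∀ s t, g (s, -t) = -g (s, t)) (s : ℝ) :
    g (s, 0) = 0 := by
  have h := hg s 0
  rw [neg_zero] at h
  have h2 : (2 : ℝ) • g (s, 0) = 0 := by rw [two_smul, ← eq_neg_iff_add_eq_zero]; exact h
  exact (smul_eq_zero.1 h2).resolve_left two_ne_zero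

lemma IsTest.exists_dirDeriv_snd_eq [CompleteSpace E] {h : ℝ × ℝ → E} (hh : IsTest h)
    (he : IsEven h) : ∃ D : ℝ × ℝ → E, IsTest D ∧ IsEven D ∧
      ∀ s t, dirDeriv (0, 1) h (s, t) = t • (2 : ℝ) • D (s, t) := by
  have hodd := he.dirDeriv_snd hh.1
  obtain ⟨q, hq, hgq⟩ := (hh.isTest_dirDeriv (0, 1)).exists_eq_smul (eq_zero_of_odd hodd)
  refine ⟨fun p => (2 : ℝ)⁻¹ • q p, ⟨contDiff_const.smul hq.1, ?_⟩, fun s t => ?_, fun s t => ?_⟩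
  · exact hq.2.smul_left (f := fun _ => (2 : ℝ)⁻¹)
  · simp only [isEven_of_smul hodd hgq s t]
  · rw [hgq, smul_inv_smul₀ two_ne_zero]

/-- The extension to negative `y` of the function `(s, y) ↦ h (s, √y)`. -/
def evenExt (k : ℝ → ℝ) (h : ℝ × ℝ → E) (p : ℝ × ℝ) : E :=
  if 0 ≤ p.2 then h (p.1, √p.2) else dilAvg k h (p.1, √(-p.2))

lemma evenExt_sq (k : ℝ → ℝ) {h : ℝ × ℝ → E} (he : IsEven h) (s t : ℝ) :
    evenExt k h (s, t ^ 2) = h (s, t) := by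
  rw [evenExt, if_pos (sq_nonneg t)]
  simp only [Real.sqrt_sq_eq_abs]
  rcases abs_choice t with ht | ht <;> rw [ht]
  exact he s t

lemma IsAlternatingKernel.integral_eq_one {k : ℝ → ℝ} (hk : IsAlternatingKernel k) :
    ∫ x, k x = 1 := by simpa using hk.2 0

lemma continuous_evenExt [CompleteSpace E] {k : ℝ → ℝ} (hk : IsAlternatingKernel k)
    {h : ℝ × ℝ → E} (hh : IsTest h) : Continuous (evenExt k h) := by
  refine Continuous.if_le (hh.1.continuous.comp (by fun_prop))
    ((continuous_dilAvg hk.1.integrable hh).comp (by fun_prop)) continuous_const continuous_snd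
    fun p hp => ?_
  simp [dilAvg, ← hp, integral_smul_const, hk.integral_eq_one]

lemma hasDerivAt_evenExt_fst {k : ℝ → ℝ} (hk : IsAlternatingKernel k)
    {h : ℝ × ℝ → E} (hh : IsTest h) (s y : ℝ) :
    HasDerivAt (fun x => evenExt k h (x, y)) (evenExt k (dirDeriv (1, 0) h) (s, y)) s := by
  by_cases hy : 0 ≤ y
  · simpa only [evenExt, if_pos hy] using hasDerivAt_fst hh.1 s √y
  · simpa only [evenExt, if_neg hy] using hasDerivAt_dilAvg_fst hk.1.integrable hh s √(-y)

lemma hasDerivAt_evenExt_snd [CompleteSpace E] {k : ℝ → ℝ} (hk : IsAlternatingKernel k)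
    {h D : ℝ × ℝ → E} (hh : IsTest h) (hD : IsTest D)
    (hhD : ∀ s t, dirDeriv (0, 1) h (s, t) = t • (2 : ℝ) • D (s, t)) (s y : ℝ) :
    HasDerivAt (fun x => evenExt k h (s, x))
      (evenExt (fun x => -(x ^ 2 * k x)) D (s, y)) y := by
  have hs : Continuous (fun x : ℝ => (s, x)) := by fun_prop
  refine hasDerivAt_of_hasDerivAt_of_ne' (x := 0)
    (g := fun y => evenExt (fun x => -(x ^ 2 * k x)) D (s, y)) (fun y hy => ?_)
    ((continuous_evenExt hk hh).comp hs).continuousAt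
    ((continuous_evenExt hk.neg_sq_mul hD).comp hs).continuousAt y
  rcases hy.lt_or_gt with hy | hy
  · have hr : √(-y) ≠ 0 := (Real.sqrt_pos.2 (neg_pos.2 hy)).ne'
    have h1 := (hasDerivAt_dilAvg_snd hk.1 hh s √(-y)).scomp y
      ((hasDerivAt_neg y).sqrt (neg_pos.2 hy).ne')
    have h2 : evenExt (fun x => -(x ^ 2 * k x)) D (s, y) =
        (-1 / (2 * √(-y))) • dilAvg (fun ξ => ξ ^ 1 * k ξ) (dirDeriv (0, 1) h) (s, √(-y)) := by
      rw [evenExt, if_neg (not_le.2 hy), dilAvg, dilAvg, ← integral_smul]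
      refine integral_congr_ae (.of_forall fun ξ => ?_)
      simp only [hhD, smul_smul]
      congr 1
      field_simp
    rw [h2]
    refine h1.congr_of_eventuallyEq ?_
    filter_upwards [Iio_mem_nhds hy] with x hx
    simp [evenExt, not_le.2 (mem_Iio.1 hx)]
  · have hr : √y ≠ 0 := (Real.sqrt_pos.2 hy).ne'
    have h1 := (hasDerivAt_snd hh.1 s √y).scomp y ((hasDerivAt_id y).sqrt hy.ne')
    have h2 : evenExt (fun x => -(x ^ 2 * k x)) D (s, y) =
        (1 / (2 * √y)) • dirDeriv (0, 1) h (s, √y) := by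
      rw [evenExt, if_pos hy.le, hhD, smul_smul, smul_smul]
      rw [show 1 / (2 * √y) * √y * 2 = 1 by field_simp, one_smul]
    rw [h2]
    refine h1.congr_of_eventuallyEq ?_
    filter_upwards [Ioi_mem_nhds hy] with x hx
    simp [evenExt, (mem_Ioi.1 hx).le]

lemma contDiff_evenExt [CompleteSpace E] {k : ℝ → ℝ} (hk : IsAlternatingKernel k)
    {h : ℝ × ℝ → E} (hh : IsTest h) (he : IsEven h) : ContDiff ℝ ∞ (evenExt k h) := by
  rw [contDiff_infty]
  intro n
  induction n generalizing k h with
  | zero => exact contDiff_zero.2 (continuous_evenExt hk hh)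
  | succ n ih =>
    obtain ⟨D, hD, hDe, hhD⟩ := hh.exists_dirDeriv_snd_eq he
    exact contDiff_succ_of_partials (hasDerivAt_evenExt_fst hk hh)
      (hasDerivAt_evenExt_snd hk hh hD hhD) (ih hk (hh.isTest_dirDeriv _) (he.dirDeriv_fst hh.1))
      (ih hk.neg_sq_mul hD hDe)

lemma IsTest.exists_eq_comp_sq [CompleteSpace E] {h : ℝ × ℝ → E} (hh : IsTest h)
    (he : IsEven h) :
    ∃ H : ℝ × ℝ → E, ContDiff ℝ ∞ H ∧ ∀ s t, h (s, t) = H (s, t ^ 2) := by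
  obtain ⟨k, hk⟩ := exists_isAlternatingKernel
  exact ⟨evenExt k h, contDiff_evenExt hk hh he, fun s t => (evenExt_sq k he s t).symm⟩

/-- Every smooth function of `(s, t)` is locally `A (s, t²) + t B (s, t²)` with smooth `A, B`. -/
lemma IsTest.exists_even_odd [CompleteSpace E] {h : ℝ × ℝ → E} (hh : IsTest h) :
    ∃ A B : ℝ × ℝ → E, ContDiff ℝ ∞ A ∧ ContDiff ℝ ∞ B ∧
      ∀ s t, h (s, t) = A (s, t ^ 2) + t • B (s, t ^ 2) := by
  let r : ℝ × ℝ ≃ₜ ℝ × ℝ := (Homeomorph.refl ℝ).prodCongr (Homeomorph.neg ℝ)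
  have hr : IsTest (fun p : ℝ × ℝ => h (p.1, -p.2)) :=
    ⟨hh.1.comp (by fun_prop), hh.2.comp_homeomorph r⟩
  let a : ℝ × ℝ → E := fun p => (2 : ℝ)⁻¹ • (h p + h (p.1, -p.2))
  let b : ℝ × ℝ → E := fun p => (2 : ℝ)⁻¹ • (h p - h (p.1, -p.2))
  have ha : IsTest a := ⟨contDiff_const.smul (hh.1.add hr.1),
    (hh.2.add hr.2).smul_left (f := fun _ => (2 : ℝ)⁻¹)⟩
  have hb : IsTest b := ⟨contDiff_const.smul (hh.1.sub hr.1),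
    (hh.2.sub hr.2).smul_left (f := fun _ => (2 : ℝ)⁻¹)⟩
  have hae : IsEven a := fun s t => by simp [a, add_comm]
  have hbo (s t : ℝ) : b (s, -t) = -b (s, t) := by simp [b, ← smul_neg]
  obtain ⟨q, hq, hbq⟩ := hb.exists_eq_smul (eq_zero_of_odd hbo)
  obtain ⟨A, hA, haA⟩ := ha.exists_eq_comp_sq hae
  obtain ⟨B, hB, hqB⟩ := hq.exists_eq_comp_sq (isEven_of_smul hbo hbq)
  refine ⟨A, B, hA, hB, fun s t => ?_⟩
  rw [← haA, ← hqB, ← hbq]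
  simp only [a, b, ← smul_add]
  rw [add_add_sub_cancel, ← two_smul ℝ, inv_smul_smul₀ two_ne_zero]

end EvenFunctions

section Recognition

lemma exists_local_inverse {E : Type*} [NormedAddCommGroup E] [NormedSpace ℝ E]
    [FiniteDimensional ℝ E] {Ψ : E → E} (hΨ : ContDiff ℝ ∞ Ψ) {x : E}
    (hx : Function.Injective (fderiv ℝ Ψ x)) :
    ∃ ψ : E → E, IsLocalDiffeoAt ψ (Ψ x) ∧ (∀ᶠ y in 𝓝 x, ψ (Ψ y) = y) ∧
      ∀ᶠ z in 𝓝 (Ψ x), Ψ (ψ z) = z := by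
  have := FiniteDimensional.complete ℝ E
  let f' : E ≃L[ℝ] E := (LinearEquiv.ofInjectiveEndo (fderiv ℝ Ψ x : E →ₗ[ℝ] E)
    hx).toContinuousLinearEquiv
  have hf' : HasFDerivAt Ψ (f' : E →L[ℝ] E) x := by
    convert! (hΨ.differentiable (by simp) x).hasFDerivAt
  let e := hΨ.contDiffAt.toOpenPartialHomeomorph Ψ hf' (by simp)
  have he : (e : E → E) = Ψ := rfl
  have hxe : x ∈ e.source := hΨ.contDiffAt.mem_toOpenPartialHomeomorph_source hf' (by simp)
  let S : Set E := fderiv ℝ Ψ ⁻¹' range ((↑) : (E ≃L[ℝ] E) → E →L[ℝ] E)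
  have hS : IsOpen S := ContinuousLinearEquiv.isOpen.preimage (hΨ.continuous_fderiv (by simp))
  have hxS : x ∈ S := ⟨f', hf'.fderiv.symm⟩
  have hV : IsOpen (e.source ∩ S) := e.open_source.inter hS
  have hU : IsOpen (e '' (e.source ∩ S)) :=
    e.isOpen_image_of_subset_source hV inter_subset_left
  refine ⟨e.symm, ⟨e '' (e.source ∩ S), e.source ∩ S, hU, hV, ⟨x, ⟨hxe, hxS⟩, rfl⟩,
    e.symm_image_image_of_subset_source inter_subset_left, ?_, Ψ, hΨ.contDiffOn, ?_, ?_⟩, ?_, ?_⟩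
  · rintro _ ⟨y, ⟨hy, ⟨g, hg⟩⟩, rfl⟩
    refine (e.contDiffAt_symm (f₀' := g) (e.map_source hy) ?_ ?_).contDiffWithinAt
    · rw [e.left_inv hy, he, hg]
      exact (hΨ.differentiable (by simp) y).hasFDerivAt
    · rw [he]; exact hΨ.contDiffAt
  · rintro _ ⟨y, ⟨hy, -⟩, rfl⟩
    rw [e.left_inv hy, he]
  · rintro y ⟨hy, -⟩
    exact e.left_inv hy
  · filter_upwards [e.open_source.mem_nhds hxe] with y hy using e.left_inv hy
  · filter_upwards [e.open_target.mem_nhds (e.map_source hxe)] with z hz using e.right_inv hz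

lemma exists_contDiff_eventuallyEq {E F : Type*} [NormedAddCommGroup E] [NormedSpace ℝ E]
    [FiniteDimensional ℝ E] [NormedAddCommGroup F] [NormedSpace ℝ F] {f : E → F} {U : Set E}
    (hf : ContDiffOn ℝ ∞ f U) (hU : IsOpen U) {x : E} (hx : x ∈ U) :
    ∃ g : E → F, ContDiff ℝ ∞ g ∧ HasCompactSupport g ∧ g =ᶠ[𝓝 x] f := by
  obtain ⟨r, hr, hrU⟩ := Metric.nhds_basis_closedBall.mem_iff.1 (hU.mem_nhds hx)
  let χ : ContDiffBump x := ⟨r / 2, r, half_pos hr, half_lt_self hr⟩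
  refine ⟨fun y => χ y • f y, contDiff_iff_contDiffAt.2 fun y => ?_,
    χ.hasCompactSupport.smul_right, ?_⟩
  · by_cases hy : y ∈ U
    · exact χ.contDiffAt.smul (hf.contDiffAt (hU.mem_nhds hy))
    · have h0 : (χ : E → ℝ) =ᶠ[𝓝 y] 0 := by
        rw [← notMem_tsupport_iff_eventuallyEq, χ.tsupport_eq]
        exact fun h => hy (hrU h)
      refine (contDiffAt_const (c := (0 : F))).congr_of_eventuallyEq ?_
      filter_upwards [h0] with z hz
      simp [hz]
  · filter_upwards [χ.eventuallyEq_one] with y hy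
    simp [hy]

lemma iteratedDeriv_comp_sq_add_cube {E : Type*} [NormedAddCommGroup E] [NormedSpace ℝ E]
    {a b c : ℝ → E} (ha : ContDiff ℝ ∞ a) (hb : ContDiff ℝ ∞ b)
    (hc : c =ᶠ[𝓝 0] fun t => a (t ^ 2) + t ^ 3 • b (t ^ 2)) :
    iteratedDeriv 2 c 0 = (2 : ℝ) • deriv a 0 ∧ iteratedDeriv 3 c 0 = (6 : ℝ) • b 0 := by
  have hda : ContDiff ℝ ∞ (deriv a) := (contDiff_infty_iff_deriv.1 ha).2
  have hdb : ContDiff ℝ ∞ (deriv b) := (contDiff_infty_iff_deriv.1 hb).2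
  have hda2 : ContDiff ℝ ∞ (deriv (deriv a)) := (contDiff_infty_iff_deriv.1 hda).2
  have hdb2 : ContDiff ℝ ∞ (deriv (deriv b)) := (contDiff_infty_iff_deriv.1 hdb).2
  have comp_sq {g : ℝ → E} (hg : ContDiff ℝ ∞ g) (t : ℝ) :
      HasDerivAt (fun t => g (t ^ 2)) ((2 * t) • deriv g (t ^ 2)) t := by
    have h := (hg.differentiable (by simp) (t ^ 2)).hasDerivAt.scomp t (hasDerivAt_pow 2 t)
    simpa using! h
  have d1 : deriv (fun t => a (t ^ 2) + t ^ 3 • b (t ^ 2)) = fun t =>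
      (2 * t) • deriv a (t ^ 2) + ((3 * t ^ 2) • b (t ^ 2) + (2 * t ^ 4) • deriv b (t ^ 2)) := by
    funext t
    refine ((comp_sq ha t).add ((hasDerivAt_pow 3 t).smul (comp_sq hb t))).deriv.trans ?_
    simp only [smul_smul]
    push_cast
    module
  have d2 : deriv (fun t : ℝ => (2 * t) • deriv a (t ^ 2) + ((3 * t ^ 2) • b (t ^ 2) +
      (2 * t ^ 4) • deriv b (t ^ 2))) = fun t => (2 : ℝ) • deriv a (t ^ 2) + ((6 * t) • b (t ^ 2) +
      t ^ 2 • ((4 : ℝ) • deriv (deriv a) (t ^ 2) + (14 * t) • deriv b (t ^ 2) +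
        (4 * t ^ 3) • deriv (deriv b) (t ^ 2))) := by
    funext t
    have p1 : HasDerivAt (fun t : ℝ => 2 * t) 2 t := by simpa using (hasDerivAt_id t).const_mul 2
    have p2 : HasDerivAt (fun t : ℝ => 3 * t ^ 2) (6 * t) t := by
      refine ((hasDerivAt_pow 2 t).const_mul 3).congr_deriv ?_
      push_cast; ring
    have p4 : HasDerivAt (fun t : ℝ => 2 * t ^ 4) (8 * t ^ 3) t := by
      refine ((hasDerivAt_pow 4 t).const_mul 2).congr_deriv ?_
      push_cast; ring
    refine ((p1.smul (comp_sq hda t)).add ((p2.smul (comp_sq hb t)).add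
      (p4.smul (comp_sq hdb t)))).deriv.trans ?_
    module
  have h2 : iteratedDeriv 2 c =ᶠ[𝓝 0] fun t => (2 : ℝ) • deriv a (t ^ 2) + ((6 * t) • b (t ^ 2) +
      t ^ 2 • ((4 : ℝ) • deriv (deriv a) (t ^ 2) + (14 * t) • deriv b (t ^ 2) +
        (4 * t ^ 3) • deriv (deriv b) (t ^ 2))) := by
    rw [iteratedDeriv_succ, iteratedDeriv_one, ← d2, ← d1]
    exact hc.deriv.deriv
  refine ⟨by simpa using h2.self_of_nhds, ?_⟩
  rw [iteratedDeriv_succ, h2.deriv_eq]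
  have q1 : HasDerivAt (fun t : ℝ => 6 * t) 6 0 := by
    simpa using (hasDerivAt_id (0 : ℝ)).const_mul 6
  let R : ℝ → E := fun t => (4 : ℝ) • deriv (deriv a) (t ^ 2) + (14 * t) • deriv b (t ^ 2) +
    (4 * t ^ 3) • deriv (deriv b) (t ^ 2)
  have hR : ContDiff ℝ ∞ R := by fun_prop
  refine (((comp_sq hda 0).const_smul (2 : ℝ)).add ((q1.smul (comp_sq hb 0)).add
    ((hasDerivAt_pow 2 (0 : ℝ)).smul
      (hR.differentiable (by simp) 0).hasDerivAt))).deriv.trans ?_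
  simp

/-- A smooth `F` with `∂F/∂t = 0` along `t = 0` factors through the cuspidal edge. -/
lemma exists_factor_cuspidal {F : ℝ × ℝ → R3} (hF : ContDiff ℝ ∞ F)
    (hF0 : ∀ᶠ s in 𝓝 (0 : ℝ), dirDeriv (0, 1) F (s, 0) = 0) :
    ∃ A B : ℝ × ℝ → R3, ContDiff ℝ ∞ A ∧ ContDiff ℝ ∞ B ∧
      ∀ᶠ p in 𝓝 (0 : ℝ × ℝ), F p = A (p.1, p.2 ^ 2) + p.2 ^ 3 • B (p.1, p.2 ^ 2) := by
  obtain ⟨G, hG, hGc, hGF⟩ := exists_contDiff_eventuallyEq hF.contDiffOn isOpen_univ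
    (mem_univ (0 : ℝ × ℝ))
  obtain ⟨A, C, hA, hC, hAC⟩ := IsTest.exists_even_odd ⟨hG, hGc⟩
  obtain ⟨K, hK, hKc, hKC⟩ := exists_contDiff_eventuallyEq hC.contDiffOn isOpen_univ
    (mem_univ (0 : ℝ × ℝ))
  obtain ⟨B, hB, hKB⟩ := IsTest.exists_eq_add_smul ⟨hK, hKc⟩
  have hs0 : Tendsto (fun s : ℝ => (s, (0 : ℝ))) (𝓝 0) (𝓝 (0 : ℝ × ℝ)) :=
    (show Continuous (fun s : ℝ => (s, (0 : ℝ))) by fun_prop).tendsto' _ _ rfl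
  have hsq : Tendsto (fun p : ℝ × ℝ => (p.1, p.2 ^ 2)) (𝓝 0) (𝓝 (0 : ℝ × ℝ)) :=
    (show Continuous (fun p : ℝ × ℝ => (p.1, p.2 ^ 2)) by fun_prop).tendsto' _ _ (by simp)
  have hC0 : ∀ᶠ s in 𝓝 (0 : ℝ), C (s, 0) = 0 := by
    filter_upwards [hF0, hs0.eventually hGF.eventually_nhds] with s hs hGs
    have h1 := hasDerivAt_snd hG s 0
    have h2 : dirDeriv (0, 1) G (s, 0) = 0 := by
      rw [← hs, dirDeriv, dirDeriv, Filter.EventuallyEq.fderiv_eq hGs]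
    rw [h2] at h1
    simp only [hAC] at h1
    have hsq' : HasDerivAt (fun t : ℝ => t ^ 2) 0 0 := by simpa using hasDerivAt_pow 2 (0 : ℝ)
    have hcomp (g : ℝ × ℝ → R3) (hg : ContDiff ℝ ∞ g) :
        HasDerivAt (fun t : ℝ => g (s, t ^ 2)) 0 0 := by
      have h := HasDerivAt.scomp (h := fun t : ℝ => t ^ 2) 0 (hasDerivAt_snd hg s (0 ^ 2)) hsq'
      simpa using! h
    have h3 := (hcomp A hA).add ((hasDerivAt_id (0 : ℝ)).smul (hcomp C hC))
    simpa using! h3.unique h1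
  refine ⟨A, B, hA, hB, ?_⟩
  have hfst : Tendsto (fun p : ℝ × ℝ => p.1) (𝓝 0) (𝓝 (0 : ℝ)) := continuous_fst.tendsto' _ _ rfl
  filter_upwards [hGF, hsq.eventually hKC, hfst.eventually hC0,
    hfst.eventually (hs0.eventually hKC)] with p h1 h2 h3 h4
  rw [← h1, show p = (p.1, p.2) from rfl, hAC]
  simp only at h2 h4 ⊢
  rw [← h2, hKB, h4, h3, zero_add, smul_smul]
  ring_nf

lemma isCuspidalEdge_of_param {f F : ℝ × ℝ → R3} {θ : ℝ × ℝ → ℝ × ℝ} (hF : ContDiff ℝ ∞ F)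
    (hθ : ContDiff ℝ ∞ θ) (hθ0 : Function.Injective (fderiv ℝ θ 0))
    (hf : ∀ᶠ p in 𝓝 (0 : ℝ × ℝ), f (θ p) = F p)
    (hF0 : ∀ᶠ s in 𝓝 (0 : ℝ), dirDeriv (0, 1) F (s, 0) = 0)
    (hind : ∀ x y z : ℝ, x • deriv (fun s => F (s, 0)) 0 +
      y • iteratedDeriv 2 (fun t => F (0, t)) 0 + z • iteratedDeriv 3 (fun t => F (0, t)) 0 = 0 →
      x = 0 ∧ y = 0 ∧ z = 0) :
    IsCuspidalEdge f (θ 0) := by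
  obtain ⟨A, B, hA, hB, hAB⟩ := exists_factor_cuspidal hF hF0
  have hs0 : Tendsto (fun s : ℝ => (s, (0 : ℝ))) (𝓝 0) (𝓝 (0 : ℝ × ℝ)) :=
    (show Continuous (fun s : ℝ => (s, (0 : ℝ))) by fun_prop).tendsto' _ _ rfl
  have ht0 : Tendsto (fun t : ℝ => ((0 : ℝ), t)) (𝓝 0) (𝓝 (0 : ℝ × ℝ)) :=
    (show Continuous (fun t : ℝ => ((0 : ℝ), t)) by fun_prop).tendsto' _ _ rfl
  have hFs : deriv (fun s => F (s, 0)) 0 = dirDeriv (1, 0) A (0, 0) := by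
    rw [← (hasDerivAt_fst hA 0 0).deriv]
    refine Filter.EventuallyEq.deriv_eq ?_
    filter_upwards [hs0.eventually hAB] with s hs
    simpa using hs
  have hc {g : ℝ × ℝ → R3} (hg : ContDiff ℝ ∞ g) : ContDiff ℝ ∞ (fun t : ℝ => g (0, t)) :=
    hg.comp (by fun_prop)
  obtain ⟨h2, h3⟩ := iteratedDeriv_comp_sq_add_cube (hc hA) (hc hB) (ht0.eventually hAB)
  rw [(hasDerivAt_snd hA 0 0).deriv] at h2
  let Ψ : R3 → R3 := fun q => A (q 0, q 1) + q 2 • B (q 0, q 1)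
  have hπ : ContDiff ℝ ∞ (fun q : R3 => (q 0, q 1)) := by fun_prop
  have hΨ : ContDiff ℝ ∞ Ψ := (hA.comp hπ).add
    ((show ContDiff ℝ ∞ (fun q : R3 => q 2) by fun_prop).smul (hB.comp hπ))
  have hΨinj : Function.Injective (fderiv ℝ Ψ 0) := by
    rw [injective_iff_map_eq_zero]
    intro v hv
    have hline : HasDerivAt (fun r : ℝ => Ψ (r • v)) (fderiv ℝ Ψ 0 v) 0 := by
      have h := (hΨ.differentiable (by simp) ((0 : ℝ) • v)).hasFDerivAt.comp_hasDerivAt (0 : ℝ)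
        ((hasDerivAt_id (0 : ℝ)).smul_const v)
      simpa using! h
    have hcoord (i : Fin 3) : HasDerivAt (fun r : ℝ => r * v i) (v i) 0 := by
      simpa using (hasDerivAt_id (0 : ℝ)).mul_const (v i)
    have hcomp {g : ℝ × ℝ → R3} (hg : ContDiff ℝ ∞ g) :
        HasDerivAt (fun r : ℝ => g (r * v 0, r * v 1)) (fderiv ℝ g (0, 0) (v 0, v 1)) 0 := by
      have h := HasFDerivAt.comp_hasDerivAt (f := fun r : ℝ => (r * v 0, r * v 1)) (0 : ℝ)
        (hg.differentiable (by simp) _).hasFDerivAt ((hcoord 0).prodMk (hcoord 1))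
      simpa using! h
    have hline' := (hcomp hA).add ((hcoord 2).smul (hcomp hB))
    have heq := hline.unique hline'
    have hsplit : fderiv ℝ A (0, 0) (v 0, v 1) =
        v 0 • dirDeriv (1, 0) A (0, 0) + v 1 • dirDeriv (0, 1) A (0, 0) := by
      rw [dirDeriv, dirDeriv, ← map_smul, ← map_smul, ← map_add]
      simp
    rw [hv, hsplit] at heq
    have hz := hind (v 0) (v 1 / 2) (v 2 / 6) (by
      rw [hFs, h2, h3, smul_smul, smul_smul, div_mul_cancel₀ _ two_ne_zero,
        div_mul_cancel₀ _ (by norm_num : (6 : ℝ) ≠ 0), heq]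
      simp)
    funext i
    fin_cases i
    · exact hz.1
    · simpa using hz.2.1
    · simpa using hz.2.2
  obtain ⟨φ, hφ, hφθ, hθφ⟩ := exists_local_inverse hθ hθ0
  obtain ⟨Φ, hΦ, hΦΨ, -⟩ := exists_local_inverse hΨ hΨinj
  let g : ℝ × ℝ → R3 := fun q => ![q.1, q.2 ^ 2, q.2 ^ 3]
  have hg0 : g 0 = 0 := by
    funext i; fin_cases i <;> simp [g]
  have hgc : Continuous g := by
    refine continuous_pi fun i => ?_
    fin_cases i <;> simp [g] <;> fun_prop
  have hfac : ∀ᶠ p in 𝓝 (0 : ℝ × ℝ), Φ (f (θ p)) = g p := by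
    filter_upwards [hf, hAB, (hgc.tendsto' 0 0 hg0).eventually hΦΨ] with p h1 h2 h3
    rw [h1, h2, ← h3]
    rfl
  have hφc : Tendsto φ (𝓝 (θ 0)) (𝓝 0) := by
    obtain ⟨U, V, hU, -, hp, -, hφU, -⟩ := hφ
    have h := (hφU.continuousOn.continuousAt (hU.mem_nhds hp)).tendsto
    rwa [hφθ.self_of_nhds] at h
  have hfθ0 : f (θ 0) = Ψ 0 := by
    rw [hf.self_of_nhds, hAB.self_of_nhds]
    simp [Ψ]
  obtain ⟨U, hU, hUo, hUm⟩ := eventually_nhds_iff.1 ((hφc.eventually hfac).and hθφ)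
  refine ⟨φ, Φ, hφ, by rwa [hfθ0], hφθ.self_of_nhds, hfac.self_of_nhds, U, hUo, hUm,
    fun x hx => ?_⟩
  have h := (hU x hx).1
  rwa [(hU x hx).2] at h

end Recognition

section NonCuspidal

lemma fderiv_cuspidal_apply (q w : ℝ × ℝ) :
    HasFDerivAt (fun q : ℝ × ℝ => (![q.1, q.2 ^ 2, q.2 ^ 3] : R3))
      (fderiv ℝ (fun q : ℝ × ℝ => (![q.1, q.2 ^ 2, q.2 ^ 3] : R3)) q) q ∧
    fderiv ℝ (fun q : ℝ × ℝ => (![q.1, q.2 ^ 2, q.2 ^ 3] : R3)) q w =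
      ![w.1, 2 * q.2 * w.2, 3 * q.2 ^ 2 * w.2] := by
  have hd : DifferentiableAt ℝ (fun q : ℝ × ℝ => (![q.1, q.2 ^ 2, q.2 ^ 3] : R3)) q := by
    rw [differentiableAt_pi]
    intro i
    fin_cases i <;> simp
  refine ⟨hd.hasFDerivAt, ?_⟩
  have h1 : HasDerivAt (fun r : ℝ => q + r • w) w 0 := by
    simpa using ((hasDerivAt_id (0 : ℝ)).smul_const w).const_add q
  have hq : q + (0 : ℝ) • w = q := by simp
  have h2 := HasFDerivAt.comp_hasDerivAt (f := fun r : ℝ => q + r • w) (0 : ℝ)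
    (hq.symm ▸ hd.hasFDerivAt) h1
  rw [hq] at h2
  refine h2.unique (hasDerivAt_pi.2 fun i => ?_)
  have h3 : HasDerivAt (fun r : ℝ => q.2 + r * w.2) w.2 0 := by
    simpa using ((hasDerivAt_id (0 : ℝ)).mul_const w.2).const_add q.2
  have h4 : HasDerivAt (fun r : ℝ => q.1 + r * w.1) w.1 0 := by
    simpa using ((hasDerivAt_id (0 : ℝ)).mul_const w.1).const_add q.1
  fin_cases i
  · simpa using! h4
  · simpa using! h3.pow 2
  · simpa using! h3.pow 3

/-- If the kernel direction is tangent to the singular curve, there is no cuspidal edge. -/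
lemma not_isCuspidalEdge_of_tangent {f : ℝ × ℝ → R3} (hf : Differentiable ℝ f)
    {τ k : ℝ → ℝ × ℝ} {u₀ : ℝ} (hk : ∀ᶠ u in 𝓝 u₀, fderiv ℝ f (τ u) (k u) = 0)
    (hk0 : ∀ u, k u ≠ 0) (hτ : HasDerivAt τ (k u₀) u₀) : ¬ IsCuspidalEdge f (τ u₀) := by
  rintro ⟨φ, Φ, ⟨U, V, hU, hV, hpU, hUV, hφ, ψ, hψ, hψφ, -⟩,
    ⟨W, -, hW, -, hpW, -, hΦ, -⟩, -, -, S, hS, hpS, hSeq⟩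
  have hφd {x : ℝ × ℝ} (hx : x ∈ U) : HasFDerivAt φ (fderiv ℝ φ x) x :=
    ((hφ.contDiffAt (hU.mem_nhds hx)).differentiableAt (by simp)).hasFDerivAt
  have hinj {x w : ℝ × ℝ} (hx : x ∈ U) (hw : fderiv ℝ φ x w = 0) : w = 0 := by
    have hxV : φ x ∈ V := hUV ▸ mem_image_of_mem φ hx
    have h1 := ((hψ.contDiffAt (hV.mem_nhds hxV)).differentiableAt
      (by simp)).hasFDerivAt.comp x (hφd hx)
    have h2 : HasFDerivAt (ψ ∘ φ) (ContinuousLinearMap.id ℝ (ℝ × ℝ)) x := by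
      refine (hasFDerivAt_id x).congr_of_eventuallyEq ?_
      filter_upwards [hU.mem_nhds hx] with y hy using hψφ y hy
    have h3 := congrArg (fun l => l w) (h2.unique h1)
    simpa [hw] using h3
  have key : ∀ᶠ u in 𝓝 u₀, (φ (τ u)).2 = 0 ∧ (fderiv ℝ φ (τ u) (k u)).1 = 0 := by
    have hτc := hτ.continuousAt
    have hfW : f ⁻¹' W ∈ 𝓝 (τ u₀) := hf.continuous.continuousAt (hW.mem_nhds hpW)
    filter_upwards [hk, hτc (hU.mem_nhds hpU), hτc (hS.mem_nhds hpS), hτc hfW]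
      with u hku huU huS huW
    have h1 := ((hΦ.contDiffAt (hW.mem_nhds huW)).differentiableAt
      (by simp)).hasFDerivAt.comp (τ u) (hf (τ u)).hasFDerivAt
    have hg := fderiv_cuspidal_apply (φ (τ u)) (fderiv ℝ φ (τ u) (k u))
    have h2 := (hg.1.comp (τ u) (hφd huU)).congr_of_eventuallyEq (f₁ := Φ ∘ f) (by
      filter_upwards [hS.mem_nhds huS] with y hy using hSeq y hy)
    have h3 := congrArg (fun l => l (k u)) (h2.unique h1)
    simp only [ContinuousLinearMap.comp_apply, hku, map_zero] at h3
    rw [hg.2] at h3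
    have e0 : (fderiv ℝ φ (τ u) (k u)).1 = 0 := by simpa using congrFun h3 0
    have e1 : 2 * (φ (τ u)).2 * (fderiv ℝ φ (τ u) (k u)).2 = 0 := by simpa using congrFun h3 1
    refine ⟨?_, e0⟩
    by_contra hne
    refine hk0 u (hinj huU (Prod.ext e0 ?_))
    exact (mul_eq_zero.1 e1).resolve_left (mul_ne_zero two_ne_zero hne)
  have h1 := (hφd hpU).comp_hasDerivAt u₀ hτ
  have h2 : HasDerivAt (fun u => (φ (τ u)).2) (fderiv ℝ φ (τ u₀) (k u₀)).2 u₀ :=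
    (ContinuousLinearMap.snd ℝ ℝ ℝ).hasFDerivAt.comp_hasDerivAt u₀ h1
  have h3 : HasDerivAt (fun u => (φ (τ u)).2) 0 u₀ := by
    refine (hasDerivAt_const u₀ (0 : ℝ)).congr_of_eventuallyEq ?_
    filter_upwards [key] with u hu using hu.1
  exact hk0 u₀ (hinj hpU (Prod.ext key.self_of_nhds.2 (h2.unique h3)))

lemma IsCuspidalEdge.congr {f g : ℝ × ℝ → R3} {p : ℝ × ℝ} (hf : IsCuspidalEdge f p)
    (hfg : f =ᶠ[𝓝 p] g) : IsCuspidalEdge g p := by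
  obtain ⟨φ, Φ, hφ, hΦ, hp, hfp, U, hU, hpU, hUeq⟩ := hf
  obtain ⟨V, hV, hVo, hpV⟩ := eventually_nhds_iff.1 hfg
  have h0 : f p = g p := hfg.self_of_nhds
  exact ⟨φ, Φ, hφ, h0 ▸ hΦ, hp, h0 ▸ hfp, U ∩ V, hU.inter hVo, ⟨hpU, hpV⟩,
    fun x hx => hV x hx.2 ▸ hUeq x hx.1⟩

end NonCuspidal

section Frame

lemma mink_comm (x y : R3) : mink x y = mink y x := by simp only [mink]; ring

lemma mink_add_left (x y z : R3) : mink (x + y) z = mink x z + mink y z := by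
  simp only [mink, Pi.add_apply]; ring

lemma mink_smul_left (r : ℝ) (x z : R3) : mink (r • x) z = r * mink x z := by
  simp only [mink, Pi.smul_apply, smul_eq_mul]; ring

lemma mink_zero_left (z : R3) : mink 0 z = 0 := by simp [mink]

lemma HasDerivAt.mink {x y : ℝ → R3} {x' y' : R3} {u : ℝ} (hx : HasDerivAt x x' u)
    (hy : HasDerivAt y y' u) :
    HasDerivAt (fun u => mink (x u) (y u)) (mink x' (y u) + mink (x u) y') u := by
  rw [hasDerivAt_pi] at hx hy
  refine (((((hx 0).mul (hy 0)).neg).add ((hx 1).mul (hy 1))).add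
    ((hx 2).mul (hy 2))).congr_deriv ?_
  simp only [_root_.mink]
  ring

lemma ContDiff.mink {x y : ℝ → R3} (hx : ContDiff ℝ ∞ x) (hy : ContDiff ℝ ∞ y) :
    ContDiff ℝ ∞ (fun u => mink (x u) (y u)) := by
  rw [contDiff_pi] at hx hy
  exact ((((hx 0).mul (hy 0)).neg).add ((hx 1).mul (hy 1))).add ((hx 2).mul (hy 2))

/-- The pointwise relations of a lightlike frame `(e, L, N)`. -/
structure IsLightlikeBasis (e L N : R3) : Prop where
  ee : mink e e = 1
  eL : mink e L = 0
  eN : mink e N = 0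
  LL : mink L L = 0
  NN : mink N N = 0
  LN : mink L N = 1

lemma IsLightlikeBasis.eq_zero {e L N x : R3} (h : IsLightlikeBasis e L N)
    (he : mink x e = 0) (hL : mink x L = 0) (hN : mink x N = 0) : x = 0 := by
  let T : (Fin 3 → ℝ) →ₗ[ℝ] R3 :=
    (LinearMap.proj 0).smulRight e + (LinearMap.proj 1).smulRight L +
      (LinearMap.proj 2).smulRight N
  have hT (c : Fin 3 → ℝ) : T c = c 0 • e + c 1 • L + c 2 • N := rfl
  have hTm (c : Fin 3 → ℝ) (y : R3) :
      mink (T c) y = c 0 * mink e y + c 1 * mink L y + c 2 * mink N y := by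
    rw [hT, mink_add_left, mink_add_left, mink_smul_left, mink_smul_left, mink_smul_left]
  have hinj : Function.Injective T := by
    rw [injective_iff_map_eq_zero]
    intro c hc
    have h0 := hTm c e
    have h1 := hTm c N
    have h2 := hTm c L
    simp only [hc, mink_zero_left, h.ee, h.eL, h.eN, h.LL, h.NN, h.LN, mink_comm L e,
      mink_comm N e, mink_comm N L] at h0 h1 h2
    ext i
    fin_cases i <;> simp <;> linarith
  have hx (y : R3) : mink x y = 0 := by
    obtain ⟨c, rfl⟩ := LinearMap.injective_iff_surjective.1 hinj y
    rw [mink_comm, hTm, mink_comm e, mink_comm L, mink_comm N, he, hL, hN]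
    ring
  have h0 := hx ![1, 0, 0]
  have h1 := hx ![0, 1, 0]
  have h2 := hx ![0, 0, 1]
  simp [mink] at h0 h1 h2
  ext i
  fin_cases i <;> simpa

lemma eventually_mink_deriv {x y : ℝ → R3} {c : ℝ → ℝ} {u₀ : ℝ} (hx : Differentiable ℝ x)
    (hy : Differentiable ℝ y) (h : ∀ᶠ u in 𝓝 u₀, mink (x u) (y u) = c u) :
    ∀ᶠ u in 𝓝 u₀, mink (deriv x u) (y u) + mink (x u) (deriv y u) = deriv c u := by
  filter_upwards [h.eventually_nhds] with u hu
  rw [← Filter.EventuallyEq.deriv_eq hu]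
  exact ((hx u).hasDerivAt.mink (hy u).hasDerivAt).deriv.symm

lemma ContDiff.deriv_infty {x : ℝ → R3} (hx : ContDiff ℝ ∞ x) : ContDiff ℝ ∞ (deriv x) :=
  (contDiff_infty_iff_deriv.1 hx).2

lemma hasDerivAt_ruled {x M L : ℝ → R3} (hx : Differentiable ℝ x) (hM : Differentiable ℝ M)
    (hL : Differentiable ℝ L) (u r b k t : ℝ) :
    HasDerivAt (fun t => x (u + t) + r • M (u + t) + (b + t * k) • L (u + t))
      (deriv x (u + t) + (r • deriv M (u + t) + k • L (u + t)) + (b + t * k) • deriv L (u + t))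
      t := by
  have h1 : HasDerivAt (fun t => u + t) 1 t := (hasDerivAt_id t).const_add u
  have h2 : HasDerivAt (fun t => b + t * k) k t := by
    simpa using ((hasDerivAt_id t).mul_const k).const_add b
  have hc {y : ℝ → R3} (hy : Differentiable ℝ y) :
      HasDerivAt (fun t => y (u + t)) (deriv y (u + t)) t := by
    simpa using! (hy (u + t)).hasDerivAt.scomp t h1
  refine (((hc hx).add ((hc hM).const_smul r)).add (h2.smul (hc hL))).congr_deriv ?_
  module

end Frame

section Ruled

variable {γ L : ℝ → R3} {β κ : ℝ → ℝ} {u₀ : ℝ}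

lemma ContDiff.ruled (hγ : ContDiff ℝ ∞ γ) (hL : ContDiff ℝ ∞ L) :
    ContDiff ℝ ∞ (fun p : ℝ × ℝ => γ p.1 + p.2 • L p.1) :=
  (hγ.comp contDiff_fst).add (contDiff_snd.smul (hL.comp contDiff_fst))

/-- Along the singular curve `v = β u` of a ruled surface with kernel field `(1, κ)`,
a cuspidal edge appears where the kernel is transversal to the curve and the third order
jet is nondegenerate. -/
lemma isCuspidalEdge_ruled (hγ : ContDiff ℝ ∞ γ) (hL : ContDiff ℝ ∞ L) (hβ : ContDiff ℝ ∞ β)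
    (hκ : ContDiff ℝ ∞ κ)
    (hsing : ∀ᶠ u in 𝓝 u₀, deriv γ u + κ u • L u + β u • deriv L u = 0)
    (hne : deriv β u₀ ≠ κ u₀)
    (hind : ∀ x y z : ℝ, x • L u₀ +
      y • (deriv (deriv γ) u₀ + (2 * κ u₀) • deriv L u₀ + β u₀ • deriv (deriv L) u₀) +
      z • (deriv (deriv (deriv γ)) u₀ + (3 * κ u₀) • deriv (deriv L) u₀ +
        β u₀ • deriv (deriv (deriv L)) u₀) = 0 → x = 0 ∧ y = 0 ∧ z = 0) :
    IsCuspidalEdge (fun p : ℝ × ℝ => γ p.1 + p.2 • L p.1) (u₀, β u₀) := by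
  have hγ1 := hγ.deriv_infty
  have hγ2 := hγ1.deriv_infty
  have hL1 := hL.deriv_infty
  have hL2 := hL1.deriv_infty
  have hd {x : ℝ → R3} (hx : ContDiff ℝ ∞ x) : Differentiable ℝ x := hx.differentiable (by simp)
  let θ : ℝ × ℝ → ℝ × ℝ := fun p => (u₀ + p.1 + p.2, β (u₀ + p.1) + p.2 * κ (u₀ + p.1))
  let F : ℝ × ℝ → R3 := fun p => γ (u₀ + p.1 + p.2) +
    (β (u₀ + p.1) + p.2 * κ (u₀ + p.1)) • L (u₀ + p.1 + p.2)
  have hθ : ContDiff ℝ ∞ θ := by fun_prop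
  have hF : ContDiff ℝ ∞ F := (hγ.ruled hL).comp hθ
  have hθ0 : θ 0 = (u₀, β u₀) := by simp [θ]
  have hadd (s : ℝ) : HasDerivAt (fun s => u₀ + s) 1 s := (hasDerivAt_id s).const_add u₀
  have hβ0 : HasDerivAt (fun s => β (u₀ + s)) (deriv β u₀) 0 := by
    have h := (hβ.differentiable (by simp) (u₀ + 0)).hasDerivAt.comp 0 (hadd 0)
    simpa using! h
  have hline (s t : ℝ) : HasDerivAt (fun t => F (s, t)) (deriv γ (u₀ + s + t) +
      κ (u₀ + s) • L (u₀ + s + t) +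
        (β (u₀ + s) + t * κ (u₀ + s)) • deriv L (u₀ + s + t)) t := by
    simpa [F] using hasDerivAt_ruled (hd hγ) (hd hL) (hd hL) (u₀ + s) 0 (β (u₀ + s))
      (κ (u₀ + s)) t
  have hD1 : deriv (fun t => F (0, t)) = fun t => deriv γ (u₀ + t) + κ u₀ • L (u₀ + t) +
      (β u₀ + t * κ u₀) • deriv L (u₀ + t) := by
    funext t
    simpa using (hline 0 t).deriv
  have hD2 : deriv (deriv (fun t => F (0, t))) = fun t => deriv (deriv γ) (u₀ + t) +
      (2 * κ u₀) • deriv L (u₀ + t) + (β u₀ + t * κ u₀) • deriv (deriv L) (u₀ + t) := by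
    funext t
    rw [hD1, (hasDerivAt_ruled (hd hγ1) (hd hL) (hd hL1) _ _ _ _ t).deriv]
    module
  have hD3 : deriv (deriv (deriv (fun t => F (0, t)))) 0 = deriv (deriv (deriv γ)) u₀ +
      (3 * κ u₀) • deriv (deriv L) u₀ + β u₀ • deriv (deriv (deriv L)) u₀ := by
    rw [hD2, (hasDerivAt_ruled (hd hγ2) (hd hL1) (hd hL2) _ _ _ _ 0).deriv]
    simp only [add_zero, zero_mul]
    module
  have hX : deriv (fun s => F (s, 0)) 0 = (deriv β u₀ - κ u₀) • L u₀ := by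
    have hc {y : ℝ → R3} (hy : Differentiable ℝ y) :
        HasDerivAt (fun s => y (u₀ + s)) (deriv y u₀) 0 := by
      simpa using! (hy (u₀ + 0)).hasDerivAt.scomp 0 (hadd 0)
    have h := ((hc (hd hγ)).add (hβ0.smul (hc (hd hL)))).deriv
    simp only [add_zero] at h
    have h2 : (fun s => F (s, 0)) =
        (fun s => γ (u₀ + s)) + (fun s => β (u₀ + s)) • fun s => L (u₀ + s) := by
      funext s
      simp [F]
    rw [h2, h]
    have h3 : deriv γ u₀ = -(κ u₀ • L u₀ + β u₀ • deriv L u₀) := by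
      rw [eq_neg_iff_add_eq_zero, ← add_assoc]
      exact hsing.self_of_nhds
    rw [h3]
    module
  rw [← hθ0]
  refine isCuspidalEdge_of_param hF hθ ?_ (Eventually.of_forall fun _ => rfl) ?_ ?_
  · have h1 : fderiv ℝ θ 0 (1, 0) = (1, deriv β u₀) := by
      refine (hasDerivAt_fst hθ 0 0).unique ?_
      simpa [θ] using (hadd 0).prodMk hβ0
    have h2 : fderiv ℝ θ 0 (0, 1) = (1, κ u₀) := by
      refine (hasDerivAt_snd hθ 0 0).unique ?_
      have h := ((hasDerivAt_id (0 : ℝ)).mul_const (κ u₀)).const_add (β u₀)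
      simpa [θ] using! (hadd 0).prodMk h
    rw [injective_iff_map_eq_zero]
    rintro ⟨x, y⟩ hxy
    have h3 : ((x, y) : ℝ × ℝ) = x • (1, 0) + y • (0, 1) := by simp
    rw [h3, map_add, map_smul, map_smul, h1, h2, Prod.ext_iff] at hxy
    simp at hxy
    obtain ⟨ha, hb⟩ := hxy
    have hx : x * (deriv β u₀ - κ u₀) = 0 := by linear_combination hb - κ u₀ * ha
    obtain hx | hx := mul_eq_zero.1 hx
    · subst hx
      simpa using ha
    · exact absurd (sub_eq_zero.1 hx) hne
  · have ht : Tendsto (fun s => u₀ + s) (𝓝 0) (𝓝 u₀) := by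
      simpa using (hadd 0).continuousAt.tendsto
    filter_upwards [ht.eventually hsing] with s hs
    rw [(hasDerivAt_snd hF s 0).unique (hline s 0)]
    simpa using hs
  · intro x y z h
    simp only [iteratedDeriv_succ, iteratedDeriv_zero] at h
    rw [hX, hD3, hD2, smul_smul] at h
    simp only [add_zero, zero_mul] at h
    obtain ⟨hx, hyz⟩ := hind _ y z h
    exact ⟨(mul_eq_zero.1 hx).resolve_right (sub_ne_zero.2 hne), hyz⟩

lemma not_isCuspidalEdge_ruled (hγ : ContDiff ℝ ∞ γ) (hL : ContDiff ℝ ∞ L)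
    (hβ : ContDiff ℝ ∞ β)
    (hsing : ∀ᶠ u in 𝓝 u₀, deriv γ u + κ u • L u + β u • deriv L u = 0)
    (heq : deriv β u₀ = κ u₀) :
    ¬ IsCuspidalEdge (fun p : ℝ × ℝ => γ p.1 + p.2 • L p.1) (u₀, β u₀) := by
  have hf := (hγ.ruled hL).differentiable (by simp)
  refine not_isCuspidalEdge_of_tangent (τ := fun u => (u, β u)) (k := fun u => (1, κ u)) hf ?_
    (fun u h => one_ne_zero (congrArg Prod.fst h)) ?_
  · filter_upwards [hsing] with u hu
    have h := hasDerivAt_ruled (hγ.differentiable (by simp)) (hL.differentiable (by simp))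
      (hL.differentiable (by simp)) u 0 (β u) (κ u) 0
    have hc : HasDerivAt (fun t : ℝ => (u + t, β u + t * κ u)) (1, κ u) 0 := by
      have h := ((hasDerivAt_id (0 : ℝ)).mul_const (κ u)).const_add (β u)
      simpa using! ((hasDerivAt_id (0 : ℝ)).const_add u).prodMk h
    have h1 := (hf (u + 0, β u + 0 * κ u)).hasFDerivAt.comp_hasDerivAt 0 hc
    have h2 := h1.unique (by simpa using! h)
    simpa [hu] using h2
  · rw [← heq]
    exact (hasDerivAt_id u₀).prodMk (hβ.differentiable (by simp) u₀).hasDerivAt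

end Ruled

section Criterion

variable {γ L N : ℝ → R3} {u₀ : ℝ}

lemma isCuspidalEdge_iff_of_contDiff (hγ : ContDiff ℝ ∞ γ) (hL : ContDiff ℝ ∞ L)
    (hN : ContDiff ℝ ∞ N)
    (hfr : ∀ᶠ u in 𝓝 u₀, IsLightlikeBasis (deriv γ u) (L u) (N u)) (hα : alphaL γ L u₀ ≠ 0) :
    IsCuspidalEdge (fun p : ℝ × ℝ => γ p.1 + p.2 • L p.1) (u₀, 1 / alphaL γ L u₀) ↔
      sigmaL γ L N u₀ ≠ 0 := by
  have hγ1 := hγ.deriv_infty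
  have hγ2 := hγ1.deriv_infty
  have hL1 := hL.deriv_infty
  have hL2 := hL1.deriv_infty
  have hd {x : ℝ → R3} (hx : ContDiff ℝ ∞ x) : Differentiable ℝ x := hx.differentiable (by simp)
  have hA : ContDiff ℝ ∞ (alphaL γ L) := hγ2.mink hL
  have hG : ContDiff ℝ ∞ (alphaG L N) := hL.mink hN.deriv_infty
  have hAo : IsOpen {u | alphaL γ L u ≠ 0} := isOpen_ne_fun hA.continuous continuous_const
  obtain ⟨β, hβ, -, hβe⟩ := exists_contDiff_eventuallyEq
    (f := fun u => 1 / alphaL γ L u) (contDiffOn_const.div hA.contDiffOn fun _ h => h) hAo hα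
  obtain ⟨κ, hκ, -, hκe⟩ := exists_contDiff_eventuallyEq
    (f := fun u => alphaG L N u / alphaL γ L u)
    (hG.contDiffOn.div hA.contDiffOn fun _ h => h) hAo hα
  have hβ0 : β u₀ = 1 / alphaL γ L u₀ := hβe.self_of_nhds
  have hκ0 : κ u₀ = alphaG L N u₀ / alphaL γ L u₀ := hκe.self_of_nhds
  have hβ' : deriv β u₀ = -deriv (alphaL γ L) u₀ / alphaL γ L u₀ ^ 2 := by
    rw [hβe.deriv_eq]
    simpa using! ((hA.differentiable (by simp) u₀).hasDerivAt.inv hα).deriv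
  have hne : deriv β u₀ = κ u₀ ↔ sigmaL γ L N u₀ = 0 := by
    rw [hβ', hκ0, sigmaL]
    field_simp
    constructor <;> intro h <;> linarith
  have hee := eventually_mink_deriv (hd hγ1) (hd hγ1) (hfr.mono fun u h => h.ee)
  have heL := eventually_mink_deriv (hd hγ1) (hd hL) (hfr.mono fun u h => h.eL)
  have hLL := eventually_mink_deriv (hd hL) (hd hL) (hfr.mono fun u h => h.LL)
  have hLN := eventually_mink_deriv (hd hL) (hd hN) (hfr.mono fun u h => h.LN)
  simp only [deriv_const] at hee heL hLL hLN
  have heL' : ∀ᶠ u in 𝓝 u₀, mink (deriv γ u) (deriv L u) = -alphaL γ L u := by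
    filter_upwards [heL] with u h
    rw [alphaL]
    linarith
  have hLL' : ∀ᶠ u in 𝓝 u₀, mink (deriv L u) (L u) = 0 := by
    filter_upwards [hLL] with u h
    rw [mink_comm (L u)] at h
    linarith
  have hLeq : ∀ᶠ u in 𝓝 u₀,
      deriv L u + alphaL γ L u • deriv γ u + alphaG L N u • L u = 0 := by
    filter_upwards [hfr, heL', hLL', hLN] with u h h1 h2 h3
    have h4 : mink (deriv L u) (N u) = -alphaG L N u := by
      rw [alphaG]
      linarith
    refine h.eq_zero ?_ ?_ ?_ <;>
    simp only [mink_add_left, mink_smul_left, mink_comm (deriv L u) (deriv γ u),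
      mink_comm (L u) (deriv γ u), h.ee, h.eL, h.eN, h.LL, h.LN, h1, h2, h4] <;> ring
  have hsing : ∀ᶠ u in 𝓝 u₀, deriv γ u + κ u • L u + β u • deriv L u = 0 := by
    filter_upwards [hLeq, hβe, hκe, hAo.mem_nhds hα] with u h1 h2 h3 h4
    have h5 : deriv L u = -(alphaL γ L u • deriv γ u + alphaG L N u • L u) := by
      rw [eq_neg_iff_add_eq_zero, ← add_assoc]
      exact h1
    have h4' : alphaL γ L u ≠ 0 := h4
    rw [h2, h3, h5, smul_neg, smul_add, smul_smul, smul_smul, one_div_mul_cancel h4',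
      div_eq_mul_one_div, mul_comm (alphaG L N u)]
    module
  rw [← hβ0]
  refine ⟨fun h hσ => not_isCuspidalEdge_ruled hγ hL hβ hsing (hne.2 hσ) h, fun hσ => ?_⟩
  refine isCuspidalEdge_ruled hγ hL hβ hκ hsing (mt hne.1 hσ) ?_
  have hLm (y : R3) : ∀ᶠ u in 𝓝 u₀, mink (deriv L u) y =
      -(alphaL γ L u * mink (deriv γ u) y + alphaG L N u * mink (L u) y) := by
    filter_upwards [hLeq] with u h
    have h1 := congrArg (fun x => mink x y) h
    simp only [mink_add_left, mink_smul_left, mink_zero_left] at h1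
    linarith
  have hL'L' : ∀ᶠ u in 𝓝 u₀, mink (deriv L u) (deriv L u) = alphaL γ L u ^ 2 := by
    filter_upwards [hLeq, heL', hLL'] with u h h1 h2
    have h3 := congrArg (fun x => mink x (deriv L u)) h
    simp only [mink_add_left, mink_smul_left, mink_zero_left, mink_comm (L u), h1, h2] at h3
    linarith
  have hA' : ∀ᶠ u in 𝓝 u₀, mink (deriv (deriv γ) u) (L u) = alphaL γ L u :=
    Eventually.of_forall fun _ => rfl
  have e1 := (eventually_mink_deriv (hd hγ1) (hd hL1) heL').self_of_nhds
  have hL2L := eventually_mink_deriv (hd hL1) (hd hL) hLL'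
  simp only [deriv_const] at hL2L
  have e2 := hL2L.self_of_nhds
  have hsum : ∀ᶠ u in 𝓝 u₀, mink (deriv (deriv L) u) (L u) = -alphaL γ L u ^ 2 := by
    filter_upwards [hL2L, hL'L'] with u h1 h2
    linarith
  have e3 := (eventually_mink_deriv (hd hL2) (hd hL) hsum).self_of_nhds
  have e4 := (eventually_mink_deriv (hd hL1) (hd hL1) hL'L').self_of_nhds
  have e5 := (eventually_mink_deriv (hd hγ2) (hd hL) hA').self_of_nhds
  have e6 := (hLm (deriv (deriv γ) u₀)).self_of_nhds
  have e7 := hee.self_of_nhds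
  have hfr0 := hfr.self_of_nhds
  have hAd := (hA.differentiable (by simp) u₀).hasDerivAt
  have hsq : deriv (fun u => alphaL γ L u ^ 2) u₀ =
      2 * alphaL γ L u₀ * deriv (alphaL γ L) u₀ := by
    simpa using! (hAd.pow 2).deriv
  have hsqn : deriv (fun u => -alphaL γ L u ^ 2) u₀ =
      -(2 * alphaL γ L u₀ * deriv (alphaL γ L) u₀) := by
    simpa using! (hAd.pow 2).neg.deriv
  have hneg : deriv (fun u => -alphaL γ L u) u₀ = -deriv (alphaL γ L) u₀ := hAd.neg.deriv
  have e8 := heL'.self_of_nhds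
  have e9 := hLL'.self_of_nhds
  have e10 := hsum.self_of_nhds
  have e11 := hL'L'.self_of_nhds
  have e12 : mink (deriv (deriv γ) u₀) (L u₀) = alphaL γ L u₀ := rfl
  rw [hsqn] at e3
  rw [hsq] at e4
  rw [hneg] at e1
  rw [mink_comm (deriv γ u₀) (deriv (deriv γ) u₀)] at e7
  rw [mink_comm (L u₀), e12, mink_comm (deriv γ u₀), mink_comm (deriv L u₀)] at e6
  rw [mink_comm (deriv L u₀) (deriv (deriv L) u₀)] at e4
  have e13 : mink (deriv (deriv γ) u₀) (deriv γ u₀) = 0 := by linarith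
  rw [e13] at e6
  intro x y z h
  have hσ' : deriv (alphaL γ L) u₀ + alphaL γ L u₀ * alphaG L N u₀ ≠ 0 := hσ
  have hpair (w : R3) := congrArg (fun x => mink x w) h
  have p1 := hpair (L u₀)
  have p2 := hpair (deriv γ u₀)
  have p3 := hpair (N u₀)
  simp only [mink_add_left, mink_smul_left, mink_zero_left] at p1 p2 p3
  have e14 : mink (deriv (deriv (deriv L)) u₀) (L u₀) =
      -3 * (alphaL γ L u₀ * deriv (alphaL γ L) u₀) := by linarith
  have e15 : mink (deriv (deriv (deriv γ)) u₀) (L u₀) =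
      deriv (alphaL γ L) u₀ + alphaL γ L u₀ * alphaG L N u₀ := by linarith
  have e16 : mink (deriv γ u₀) (deriv (deriv L) u₀) =
      -deriv (alphaL γ L) u₀ + alphaL γ L u₀ * alphaG L N u₀ := by linarith
  rw [hfr0.LL, e12, e9, e10, e14, e15, hβ0, hκ0] at p1
  rw [mink_comm (L u₀), hfr0.eL, e13, mink_comm (deriv L u₀), e8,
    mink_comm (deriv (deriv L) u₀), e16, hβ0, hκ0] at p2
  have hz : z = 0 := by
    have h1 : z * (-2 * (deriv (alphaL γ L) u₀ + alphaL γ L u₀ * alphaG L N u₀)) = 0 := by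
      rw [← p1]
      field_simp
      ring
    exact (mul_eq_zero.1 h1).resolve_right (mul_ne_zero (by norm_num) hσ')
  subst hz
  have hy : y = 0 := by
    have h1 : y * (-(deriv (alphaL γ L) u₀ + alphaL γ L u₀ * alphaG L N u₀) /
        alphaL γ L u₀) = 0 := by
      rw [← p2]
      field_simp
      ring
    exact (mul_eq_zero.1 h1).resolve_right (div_ne_zero (neg_ne_zero.2 hσ') hα)
  subst hy
  rw [hfr0.LN] at p3
  exact ⟨by linarith, rfl, rfl⟩

lemma LightlikeFrame.swap {I : Set ℝ} (h : LightlikeFrame I γ L N) : LightlikeFrame I γ N L :=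
  ⟨h.smooth_gamma, h.smooth_N, h.smooth_L, h.unit_speed, h.eN, h.eL, h.NN, h.LL,
    fun u hu => by rw [mink_comm, h.LN u hu]⟩

lemma LightlikeFrame.alphaG_swap {I : Set ℝ} (h : LightlikeFrame I γ L N) (hI : IsOpen I)
    (hu : u₀ ∈ I) : alphaG N L u₀ = -alphaG L N u₀ := by
  have hnhds := hI.mem_nhds hu
  have hL := ((h.smooth_L.contDiffAt hnhds).differentiableAt (by simp)).hasDerivAt
  have hN := ((h.smooth_N.contDiffAt hnhds).differentiableAt (by simp)).hasDerivAt
  have hLN : (fun u => mink (L u) (N u)) =ᶠ[𝓝 u₀] fun _ => 1 := by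
    filter_upwards [hnhds] with u hu using h.LN u hu
  have h1 := (hL.mink hN).unique ((hasDerivAt_const u₀ (1 : ℝ)).congr_of_eventuallyEq hLN)
  rw [alphaG, alphaG, mink_comm]
  linarith

lemma LightlikeFrame.isCuspidalEdge_iff {I : Set ℝ} (h : LightlikeFrame I γ L N) (hI : IsOpen I)
    (hu : u₀ ∈ I) (hα : alphaL γ L u₀ ≠ 0) :
    IsCuspidalEdge (fun p : ℝ × ℝ => γ p.1 + p.2 • L p.1) (u₀, 1 / alphaL γ L u₀) ↔
      sigmaL γ L N u₀ ≠ 0 := by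
  obtain ⟨γ', hγ', -, hγe⟩ := exists_contDiff_eventuallyEq h.smooth_gamma hI hu
  obtain ⟨L', hL', -, hLe⟩ := exists_contDiff_eventuallyEq h.smooth_L hI hu
  obtain ⟨N', hN', -, hNe⟩ := exists_contDiff_eventuallyEq h.smooth_N hI hu
  have hfr : ∀ᶠ u in 𝓝 u₀, IsLightlikeBasis (deriv γ' u) (L' u) (N' u) := by
    filter_upwards [hI.mem_nhds hu, hγe.deriv, hLe, hNe] with u hu h1 h2 h3
    rw [h1, h2, h3]
    exact ⟨h.unit_speed u hu, h.eL u hu, h.eN u hu, h.LL u hu, h.NN u hu, h.LN u hu⟩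
  have hA : alphaL γ' L' =ᶠ[𝓝 u₀] alphaL γ L := by
    filter_upwards [hγe.deriv.deriv, hLe] with u h1 h2
    rw [alphaL, alphaL, h1, h2]
  have hσ : sigmaL γ' L' N' u₀ = sigmaL γ L N u₀ := by
    rw [sigmaL, sigmaL, hA.deriv_eq, hA.self_of_nhds, alphaG, alphaG, hLe.self_of_nhds,
      hNe.deriv_eq]
  have hf : (fun p : ℝ × ℝ => γ' p.1 + p.2 • L' p.1) =ᶠ[𝓝 (u₀, 1 / alphaL γ L u₀)]
      fun p : ℝ × ℝ => γ p.1 + p.2 • L p.1 := by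
    have ht : Tendsto Prod.fst (𝓝 (u₀, 1 / alphaL γ L u₀)) (𝓝 u₀) :=
      continuous_fst.tendsto _
    filter_upwards [ht.eventually hγe, ht.eventually hLe] with p h1 h2
    rw [h1, h2]
  have hiff := isCuspidalEdge_iff_of_contDiff hγ' hL' hN' hfr (by rwa [hA.self_of_nhds])
  rw [hA.self_of_nhds, hσ] at hiff
  rw [← hiff]
  exact ⟨fun hc => hc.congr hf.symm, fun hc => hc.congr hf⟩

end Criterion

/-- If `α_L(u₀) ≠ 0`, the osculating lightlike surface
`f_L(u,v) = γ̂(u) + v L(u)` has a cuspidal edge at the singular point `(u₀, 1/α_L(u₀))`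
iff `σ_L(u₀) ≠ 0`; similarly for `f_N` with `α_N`, `σ_N`. -/
theorem cuspidal_edge_criterion (a b : ℝ) (γ L N : ℝ → R3)
    (hframe : LightlikeFrame (Set.Ioo a b) γ L N)
    (u₀ : ℝ) (hu₀ : u₀ ∈ Set.Ioo a b) :
    (alphaL γ L u₀ ≠ 0 →
      (IsCuspidalEdge (fun p : ℝ × ℝ => γ p.1 + p.2 • L p.1) (u₀, 1 / alphaL γ L u₀) ↔
        sigmaL γ L N u₀ ≠ 0)) ∧
    (alphaN γ N u₀ ≠ 0 →
      (IsCuspidalEdge (fun p : ℝ × ℝ => γ p.1 + p.2 • N p.1) (u₀, 1 / alphaN γ N u₀) ↔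
        sigmaN γ L N u₀ ≠ 0)) := by
  refine ⟨hframe.isCuspidalEdge_iff isOpen_Ioo hu₀, fun hα => ?_⟩
  have hσ : sigmaL γ N L u₀ = sigmaN γ L N u₀ := by
    rw [sigmaL, sigmaN, hframe.alphaG_swap isOpen_Ioo hu₀, mul_neg, ← sub_eq_add_neg]
    rfl
  rw [← hσ]
  exact hframe.swap.isCuspidalEdge_iff isOpen_Ioo hu₀ hα
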